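/- arXiv:1311.4859 — 2 statements merged into one kernel-verified Lean document; each statement's English description precedes it below -/
import Mathlib

section
/- Let G₁ and G₂ be nucleation-free graphs that are independent in ℝ³, with an implied non-edge {a₁,b₁} of G₁ and an implied non-edge {a₂,b₂} of G₂. Then any 1-sum of G₁ and G₂ (obtained from disjoint copies by identifying one vertex of G₁ with one vertex of G₂) and any 2-sum of G₁ and G₂ (obtained by identifying the two endpoints of an edge of G₁ with the two endpoints of an edge of G₂) is nucleation-free and independent in ℝ³; moreover, whenever the image of the pair {a₁,b₁} (respectively {a₂,b₂}) is still a non-edge of the sum, it is an implied non-edge of the sum. -/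
/-! A graph is independent exactly when one framework makes its rigidity rows linearly
independent, so no generic framework is needed: independence of the sum only requires one good
framework. Independent frameworks of the two pieces can be moved by an invertible affine map,
which preserves independence of the rows, until they agree on the shared vertices. Row
combinations are equilibrium loads (zero total force and torque); one that is resolved by both
pieces is supported on the shared vertices, hence vanishes for a 1-sum and is a multiple of the
row of the common edge for a 2-sum (`isIndependent_oneSum`, `isIndependent_twoSum`).

A non-edge of an independent graph is implied exactly when adding it destroys independence
(`isImpliedNonEdge_iff`). Independence passes to subgraphs, so an implied non-edge of a piece
stays implied in the sum as long as it is a non-edge (`IsImpliedNonEdge.map`).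

For independent graphs, nucleation-freeness concerns only edge counts of induced subgraphs.
The rows on `n ≥ 3` vertices span at most `3n - 6` dimensions at every framework
(`finrank_rows_le`): the infinitesimal isometries are orthogonal to the rows, and a collinear
framework has rank at most `n`. A vertex set inside one piece is handled by that piece; one
meeting both pieces properly spans too few edges, as the common edge of a 2-sum is counted
twice when the two counts are added (`nucleationFree_glue`). -/

open SimpleGraph

variable {V : Type*}

/-- The rigidity row of an (ordered) pair of vertices at a framework `p`. -/
def rigidityRow [DecidableEq V] (p : V → Fin 3 → ℝ) (i j : V) : V → Fin 3 → ℝ :=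
  fun k => if k = i then p i - p j else if k = j then p j - p i else 0

/-- The rank of the rigidity rows of `G` at `p`. -/
noncomputable def rankAt [DecidableEq V] (G : SimpleGraph V) (p : V → Fin 3 → ℝ) : ℕ :=
  Module.finrank ℝ (Submodule.span ℝ
    {w : V → Fin 3 → ℝ | ∃ i j, G.Adj i j ∧ w = rigidityRow p i j})

/-- generic 3-dimensional rank of a graph. -/
noncomputable def genRank [DecidableEq V] (G : SimpleGraph V) : ℕ :=
  sSup {n : ℕ | ∃ p : V → Fin 3 → ℝ, n = rankAt G p}

noncomputable def numEdges (G : SimpleGraph V) : ℕ := G.edgeSet.ncard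

def IsIndependent [DecidableEq V] (G : SimpleGraph V) : Prop := genRank G = numEdges G

def NucleationFree [DecidableEq V] (G : SimpleGraph V) : Prop :=
  ∀ S : Finset V, 5 ≤ S.card → genRank (G.induce (S : Set V)) ≠ 3 * S.card - 6

def addEdge (G : SimpleGraph V) (x y : V) : SimpleGraph V :=
  G ⊔ SimpleGraph.fromEdgeSet {s(x, y)}

def IsImpliedNonEdge [DecidableEq V] (G : SimpleGraph V) (x y : V) : Prop :=
  x ≠ y ∧ ¬ G.Adj x y ∧ genRank (addEdge G x y) = genRank G

/-- `G` (on vertex type `W`) is obtained by gluing `G₁` and `G₂` along the embeddings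
`f` and `g`: `f` and `g` are injective, every vertex of `G` comes from `G₁` or `G₂`,
and the edges of `G` are exactly the images of the edges of `G₁` and of `G₂`. -/
structure IsGlue {V₁ V₂ W : Type*} (G₁ : SimpleGraph V₁) (G₂ : SimpleGraph V₂)
    (G : SimpleGraph W) (f : V₁ → W) (g : V₂ → W) : Prop where
  f_inj : Function.Injective f
  g_inj : Function.Injective g
  cover : ∀ w, (∃ x, f x = w) ∨ (∃ y, g y = w)
  adj_iff : ∀ w w', G.Adj w w' ↔
    ((∃ x x', f x = w ∧ f x' = w' ∧ G₁.Adj x x') ∨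
     (∃ y y', g y = w ∧ g y' = w' ∧ G₂.Adj y y'))

/-! ### Rigidity rows indexed by unordered pairs -/

theorem rigidityRow_eq_single [DecidableEq V] (p : V → Fin 3 → ℝ) (i j : V) :
    rigidityRow p i j = Pi.single i (p i - p j) - Pi.single j (p i - p j) := by
  funext k
  simp only [rigidityRow, Pi.sub_apply, Pi.single_apply]
  by_cases hi : k = i <;> by_cases hj : k = j
  · subst hi; subst hj; simp
  · simp [hi, hi ▸ hj]
  · simp [hj, hj ▸ hi]
  · simp [hi, hj]

theorem rigidityRow_comm [DecidableEq V] (p : V → Fin 3 → ℝ) (i j : V) :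
    rigidityRow p i j = rigidityRow p j i := by
  rw [rigidityRow_eq_single, rigidityRow_eq_single, ← neg_sub (p i) (p j), Pi.single_neg,
    Pi.single_neg]
  abel

/-- The rigidity row of an unordered pair; well defined because `rigidityRow p i j` does not
depend on the order of `i` and `j`. -/
def edgeRow [DecidableEq V] (p : V → Fin 3 → ℝ) : Sym2 V → V → Fin 3 → ℝ :=
  Sym2.lift ⟨rigidityRow p, rigidityRow_comm p⟩

@[simp] theorem edgeRow_mk [DecidableEq V] (p : V → Fin 3 → ℝ) (i j : V) :
    edgeRow p s(i, j) = rigidityRow p i j := rfl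

theorem rowSet_eq [DecidableEq V] (G : SimpleGraph V) (p : V → Fin 3 → ℝ) :
    {w : V → Fin 3 → ℝ | ∃ i j, G.Adj i j ∧ w = rigidityRow p i j} =
      edgeRow p '' G.edgeSet := by
  ext w
  constructor
  · rintro ⟨i, j, h, rfl⟩
    exact ⟨s(i, j), h, rfl⟩
  · rintro ⟨e, he, rfl⟩
    induction e with | _ i j => exact ⟨i, j, he, rfl⟩

theorem rankAt_eq [DecidableEq V] (G : SimpleGraph V) (p : V → Fin 3 → ℝ) :
    rankAt G p = Module.finrank ℝ (Submodule.span ℝ (edgeRow p '' G.edgeSet)) := by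
  rw [rankAt, rowSet_eq]

/-! ### Generic rank and independence -/

theorem rankAt_le_numEdges [DecidableEq V] [Finite V] (G : SimpleGraph V)
    (p : V → Fin 3 → ℝ) : rankAt G p ≤ numEdges G := by
  have := Fintype.ofFinite G.edgeSet
  rw [rankAt_eq, Set.image_eq_range, numEdges, ← Nat.card_coe_set_eq, Nat.card_eq_fintype_card]
  exact finrank_range_le_card _

theorem rankAt_eq_numEdges_iff [DecidableEq V] [Finite V] (G : SimpleGraph V)
    (p : V → Fin 3 → ℝ) :
    rankAt G p = numEdges G ↔ LinearIndepOn ℝ (edgeRow p) G.edgeSet := by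
  have := Fintype.ofFinite G.edgeSet
  rw [rankAt_eq, Set.image_eq_range, numEdges, ← Nat.card_coe_set_eq, Nat.card_eq_fintype_card,
    LinearIndepOn, linearIndependent_iff_card_eq_finrank_span, eq_comm]
  rfl

theorem rankSet_bddAbove [DecidableEq V] [Finite V] (G : SimpleGraph V) :
    BddAbove {n : ℕ | ∃ p : V → Fin 3 → ℝ, n = rankAt G p} :=
  ⟨numEdges G, by rintro _ ⟨p, rfl⟩; exact rankAt_le_numEdges G p⟩

theorem rankAt_le_genRank [DecidableEq V] [Finite V] (G : SimpleGraph V)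
    (p : V → Fin 3 → ℝ) : rankAt G p ≤ genRank G :=
  le_csSup (rankSet_bddAbove G) ⟨p, rfl⟩

theorem exists_genRank_eq [DecidableEq V] [Finite V] (G : SimpleGraph V) :
    ∃ p : V → Fin 3 → ℝ, genRank G = rankAt G p :=
  Nat.sSup_mem (s := {n : ℕ | ∃ p : V → Fin 3 → ℝ, n = rankAt G p}) ⟨_, 0, rfl⟩
    (rankSet_bddAbove G)

theorem genRank_le_numEdges [DecidableEq V] [Finite V] (G : SimpleGraph V) :
    genRank G ≤ numEdges G := by
  obtain ⟨p, hp⟩ := exists_genRank_eq G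
  exact hp ▸ rankAt_le_numEdges G p

/-- Independence is witnessed by a single framework with linearly independent rows. -/
theorem isIndependent_iff [DecidableEq V] [Finite V] (G : SimpleGraph V) :
    IsIndependent G ↔ ∃ p : V → Fin 3 → ℝ, LinearIndepOn ℝ (edgeRow p) G.edgeSet := by
  constructor
  · intro h
    obtain ⟨p, hp⟩ := exists_genRank_eq G
    exact ⟨p, (rankAt_eq_numEdges_iff G p).1 (hp ▸ h)⟩
  · rintro ⟨p, hp⟩
    exact le_antisymm (genRank_le_numEdges G)
      ((rankAt_eq_numEdges_iff G p).2 hp ▸ rankAt_le_genRank G p)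

/-! ### Transport of rows along injections and affine maps -/

/-- Extension by zero of velocity assignments along an injective map of vertex sets. -/
noncomputable def extendZero {V W : Type*} (f : V → W) (hf : Function.Injective f) :
    (V → Fin 3 → ℝ) →ₗ[ℝ] (W → Fin 3 → ℝ) where
  toFun v := Function.extend f v 0
  map_add' v v' := by
    funext w
    by_cases h : ∃ x, f x = w
    · obtain ⟨x, rfl⟩ := h
      simp [hf.extend_apply]
    · simp [Function.extend_apply' _ _ _ h]
  map_smul' c v := by
    funext w
    by_cases h : ∃ x, f x = w
    · obtain ⟨x, rfl⟩ := h
      simp [hf.extend_apply]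
    · simp [Function.extend_apply' _ _ _ h]

theorem extendZero_injective {V W : Type*} (f : V → W) (hf : Function.Injective f) :
    Function.Injective (extendZero f hf) := by
  intro v v' h
  funext x
  have := congrFun h (f x)
  simpa [extendZero, hf.extend_apply] using this

theorem extendZero_edgeRow {V W : Type*} [DecidableEq V] [DecidableEq W] (f : V → W)
    (hf : Function.Injective f) (p : W → Fin 3 → ℝ) (e : Sym2 V) :
    extendZero f hf (edgeRow (p ∘ f) e) = edgeRow p (e.map f) := by
  induction e with | _ i j =>
  funext w
  simp only [Sym2.map_mk, edgeRow_mk, extendZero, LinearMap.coe_mk, AddHom.coe_mk]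
  by_cases h : ∃ x, f x = w
  · obtain ⟨x, rfl⟩ := h
    rw [hf.extend_apply]
    simp [rigidityRow, hf.eq_iff]
  · rw [Function.extend_apply' _ _ _ h]
    have hi : w ≠ f i := fun hw => h ⟨i, hw.symm⟩
    have hj : w ≠ f j := fun hw => h ⟨j, hw.symm⟩
    simp [rigidityRow, hi, hj]

/-- Rows of a subframework are independent exactly when they are independent in the ambient
framework, where they are padded with zeros. -/
theorem linearIndepOn_image_iff {V W : Type*} [DecidableEq V] [DecidableEq W] (f : V → W)
    (hf : Function.Injective f) (p : W → Fin 3 → ℝ) (E : Set (Sym2 V)) :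
    LinearIndepOn ℝ (edgeRow p) (Sym2.map f '' E) ↔ LinearIndepOn ℝ (edgeRow (p ∘ f)) E := by
  have hcomp : edgeRow p ∘ Sym2.map f = extendZero f hf ∘ edgeRow (p ∘ f) :=
    funext fun e => (extendZero_edgeRow f hf p e).symm
  constructor
  · intro h
    have h' := h.comp_of_image (Sym2.map.injective hf).injOn
    rw [hcomp] at h'
    exact h'.of_comp _
  · intro h
    apply LinearIndepOn.image_of_comp
    rw [hcomp]
    exact h.map_injOn _ (extendZero_injective f hf).injOn

theorem IsIndependent.of_injective {V W : Type*} [DecidableEq V] [DecidableEq W] [Finite V]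
    [Finite W] {H : SimpleGraph V} {G : SimpleGraph W} (hG : IsIndependent G) (f : V → W)
    (hf : Function.Injective f) (hadj : ∀ x y, H.Adj x y → G.Adj (f x) (f y)) :
    IsIndependent H := by
  obtain ⟨p, hp⟩ := (isIndependent_iff G).1 hG
  refine (isIndependent_iff H).2 ⟨p ∘ f, (linearIndepOn_image_iff f hf p _).1 (hp.mono ?_)⟩
  rintro _ ⟨e, he, rfl⟩
  induction e with | _ i j => exact hadj i j he

/-- Applying an invertible affine map to a framework preserves independence of rows. -/
theorem linearIndepOn_affine [DecidableEq V] (A : (Fin 3 → ℝ) ≃ₗ[ℝ] (Fin 3 → ℝ))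
    (c : Fin 3 → ℝ) (p : V → Fin 3 → ℝ) (E : Set (Sym2 V))
    (h : LinearIndepOn ℝ (edgeRow p) E) :
    LinearIndepOn ℝ (edgeRow fun i => A (p i) + c) E := by
  have hcomp : (edgeRow fun i => A (p i) + c) =
      (LinearMap.compLeft A.toLinearMap V) ∘ edgeRow p := by
    funext e
    induction e with | _ i j =>
    funext k
    simp only [edgeRow_mk, rigidityRow, Function.comp_apply, LinearMap.compLeft_apply,
      LinearEquiv.coe_coe]
    split_ifs <;> simp
  rw [hcomp]
  refine h.map_injOn _ (Function.Injective.injOn fun v v' hv => ?_)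
  funext k
  exact A.injective (congrFun hv k)

/-! ### Equilibrium and the rank bound -/

/-- The rows of a framework are equilibrium loads: total force and total torque vanish. -/
theorem equilibrium [DecidableEq V] [Fintype V] (p : V → Fin 3 → ℝ) (E : Set (Sym2 V))
    {w : V → Fin 3 → ℝ} (hw : w ∈ Submodule.span ℝ (edgeRow p '' E)) :
    ∑ i, w i = 0 ∧ ∑ i, crossProduct (p i) (w i) = 0 := by
  induction hw using Submodule.span_induction with
  | mem w h =>
    obtain ⟨e, -, rfl⟩ := h
    induction e with | _ i j =>
    rw [edgeRow_mk, rigidityRow_eq_single]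
    have key : ∀ (i : V) (d : Fin 3 → ℝ) (k : V), crossProduct (p k)
        (Pi.single (M := fun _ => Fin 3 → ℝ) i d k) =
        Pi.single (M := fun _ => Fin 3 → ℝ) i (crossProduct (p i) d) k := by
      intro i d k
      by_cases hk : k = i
      · subst hk; simp
      · simp [hk]
    constructor
    · simp
    · simp only [Pi.sub_apply, map_sub, Finset.sum_sub_distrib, key]
      simp only [Finset.sum_pi_single', Finset.mem_univ, if_true]
      rw [cross_self, cross_self, ← cross_anticomm (p i) (p j)]
      abel
  | zero => simp
  | add x y _ _ hx hy => simp [Finset.sum_add_distrib, hx.1, hx.2, hy.1, hy.2]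
  | smul c x _ hx => simp [← Finset.smul_sum, hx.1, hx.2]

theorem eq_smul_of_cross_eq_zero {v d : Fin 3 → ℝ} (hv : v ≠ 0)
    (h : crossProduct v d = 0) : ∃ c : ℝ, d = c • v := by
  have h1 : ¬ LinearIndependent ℝ ![v, d] := fun hli =>
    crossProduct_ne_zero_iff_linearIndependent.2 hli h
  rw [LinearIndependent.pair_iff' hv] at h1
  push Not at h1
  obtain ⟨c, hc⟩ := h1
  exact ⟨c, hc.symm⟩

/-- On at least three vertices, the rows of any framework, degenerate or not, span a space of
dimension at most `3 |V| - 6`. -/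
theorem finrank_rows_le [DecidableEq V] [Fintype V] (hV : 3 ≤ Fintype.card V)
    (p : V → Fin 3 → ℝ) (E : Set (Sym2 V)) :
    Module.finrank ℝ (Submodule.span ℝ (edgeRow p '' E)) ≤ 3 * Fintype.card V - 6 := by
  by_cases hcol : ∃ v : Fin 3 → ℝ, v ≠ 0 ∧ ∀ i j, crossProduct v (p i - p j) = 0
  · -- Collinear framework: every row is a scalar function on the vertices times the direction
    -- `v`, so the rank is at most `|V|`, which is at most `3 |V| - 6`.
    obtain ⟨v, hv, h⟩ := hcol
    let L : (V → ℝ) →ₗ[ℝ] (V → Fin 3 → ℝ) :=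
      LinearMap.compLeft (LinearMap.toSpanSingleton ℝ (Fin 3 → ℝ) v) V
    have hle : Submodule.span ℝ (edgeRow p '' E) ≤ LinearMap.range L := by
      rw [Submodule.span_le]
      rintro _ ⟨e, -, rfl⟩
      induction e with | _ i j =>
      obtain ⟨c, hc⟩ := eq_smul_of_cross_eq_zero hv (h i j)
      refine ⟨Pi.single i c - Pi.single j c, ?_⟩
      rw [edgeRow_mk, rigidityRow_eq_single, hc]
      funext k
      simp only [L, LinearMap.compLeft_apply, Function.comp_apply, Pi.sub_apply,
        LinearMap.toSpanSingleton_apply, sub_smul]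
      by_cases hi : k = i <;> by_cases hj : k = j <;> simp [Pi.single_apply, hi, hj]
    have h1 := Submodule.finrank_mono hle
    have h2 := LinearMap.finrank_range_le L
    rw [Module.finrank_fintype_fun_eq_card] at h2
    omega
  · -- Otherwise the infinitesimal isometries form a space of dimension 6 orthogonal to all rows.
    push Not at hcol
    let T : ((Fin 3 → ℝ) × (Fin 3 → ℝ)) →ₗ[ℝ] (V → Fin 3 → ℝ) :=
      { toFun := fun uv i => uv.1 + crossProduct uv.2 (p i)
        map_add' := by
          intro a b; funext i
          simp only [Prod.fst_add, Prod.snd_add, map_add, LinearMap.add_apply, Pi.add_apply]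
          abel
        map_smul' := by
          intro c a; funext i
          simp [smul_add] }
    have hTinj : Function.Injective T := by
      rw [injective_iff_map_eq_zero]
      rintro ⟨u, v⟩ h
      have hi : ∀ i, u + crossProduct v (p i) = 0 := fun i => congrFun h i
      have hv : v = 0 := by
        by_contra hv
        obtain ⟨i, j, hij⟩ := hcol v hv
        apply hij
        rw [map_sub, ← add_sub_add_left_eq_sub _ _ u, hi i, hi j, sub_zero]
      have : Nonempty V := Fintype.card_pos_iff.1 (by omega)
      have hu := hi this.some
      simp only [hv, map_zero, LinearMap.zero_apply, add_zero] at hu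
      simp [hu, hv]
    have hdisj : Disjoint (Submodule.span ℝ (edgeRow p '' E)) (LinearMap.range T) := by
      rw [Submodule.disjoint_def]
      rintro w hw ⟨⟨u, v⟩, huv⟩
      obtain ⟨h1, h2⟩ := equilibrium p E hw
      have hpair : ∑ i, w i ⬝ᵥ w i = 0 := by
        have hi : ∀ i, w i ⬝ᵥ w i = u ⬝ᵥ w i + v ⬝ᵥ crossProduct (p i) (w i) := by
          intro i
          have : w i = u + crossProduct v (p i) := (congrFun huv i).symm
          calc w i ⬝ᵥ w i = (u + crossProduct v (p i)) ⬝ᵥ w i := by rw [← this]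
            _ = _ := by
              rw [add_dotProduct, dotProduct_comm (crossProduct v (p i)),
                triple_product_permutation]
        simp only [hi, Finset.sum_add_distrib]
        rw [← dotProduct_sum, ← dotProduct_sum, h1, h2]
        simp
      have hnn : ∀ i, 0 ≤ w i ⬝ᵥ w i := fun i =>
        Finset.sum_nonneg fun k _ => mul_self_nonneg _
      funext i
      have := (Finset.sum_eq_zero_iff_of_nonneg fun i _ => hnn i).1 hpair i (Finset.mem_univ i)
      exact dotProduct_self_eq_zero.1 this
    have h1 := Submodule.finrank_add_finrank_le_of_disjoint hdisj
    rw [LinearMap.finrank_range_of_inj hTinj] at h1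
    simp only [Module.finrank_prod, Module.finrank_pi_fintype, Module.finrank_self,
      Finset.sum_const, Finset.card_univ, Fintype.card_fin, smul_eq_mul, mul_one] at h1
    omega

/-- Counting bound for the edges of an independent graph: Maxwell's count on at least three
vertices, and the trivial count below that. -/
theorem IsIndependent.numEdges_le [DecidableEq V] [Fintype V] {H : SimpleGraph V}
    (h : IsIndependent H) :
    (3 ≤ Fintype.card V → numEdges H ≤ 3 * Fintype.card V - 6) ∧
      (Fintype.card V = 2 → numEdges H ≤ 1) ∧ (Fintype.card V ≤ 1 → numEdges H = 0) := by
  classical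
  have hc : numEdges H ≤ (Fintype.card V).choose 2 := by
    rw [numEdges, ← coe_edgeFinset, Set.ncard_coe_finset]
    exact card_edgeFinset_le_card_choose_two
  refine ⟨fun h3 => ?_, fun h2 => by simpa [h2] using hc, fun h1 => ?_⟩
  · obtain ⟨p, hp⟩ := (isIndependent_iff H).1 h
    rw [← (rankAt_eq_numEdges_iff H p).2 hp, rankAt_eq]
    exact finrank_rows_le h3 p _
  · rw [Nat.choose_eq_zero_of_lt (by omega)] at hc
    omega

/-! ### Gluing frameworks -/

theorem eq_zero_off_of_mem_span [DecidableEq V] (p : V → Fin 3 → ℝ) {E : Set (Sym2 V)}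
    {T : Set V} (hE : ∀ e ∈ E, ∀ v ∈ e, v ∈ T) {w : V → Fin 3 → ℝ}
    (hw : w ∈ Submodule.span ℝ (edgeRow p '' E)) {k : V} (hk : k ∉ T) : w k = 0 := by
  induction hw using Submodule.span_induction with
  | mem w h =>
    obtain ⟨e, he, rfl⟩ := h
    induction e with | _ i j =>
    have hi : k ≠ i := fun h => hk (h ▸ hE _ he i (by simp))
    have hj : k ≠ j := fun h => hk (h ▸ hE _ he j (by simp))
    simp [rigidityRow, hi, hj]
  | zero => rfl
  | add x y _ _ hx hy => simp [hx, hy]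
  | smul c x _ hx => simp [hx]

/-- An equilibrium load supported on two distinct points acts along the line through them. -/
theorem exists_smul_rigidityRow [DecidableEq V] [Fintype V] (p : V → Fin 3 → ℝ) {x y : V}
    (hxy : x ≠ y) (hp : p x ≠ p y) {w : V → Fin 3 → ℝ}
    (hsupp : ∀ k, k ≠ x ∧ k ≠ y → w k = 0) (h1 : ∑ i, w i = 0)
    (h2 : ∑ i, crossProduct (p i) (w i) = 0) : ∃ c : ℝ, w = c • rigidityRow p x y := by
  rw [Fintype.sum_eq_add x y hxy hsupp] at h1
  rw [Fintype.sum_eq_add x y hxy (fun k hk => by rw [hsupp k hk, map_zero])] at h2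
  have hy : w y = - w x := (neg_eq_of_add_eq_zero_right h1).symm
  have hc : crossProduct (p x - p y) (w x) = 0 := by
    rw [hy, map_neg] at h2
    rw [map_sub, LinearMap.sub_apply, sub_eq_add_neg]
    exact h2
  obtain ⟨c, hcx⟩ := eq_smul_of_cross_eq_zero (sub_ne_zero.2 hp) hc
  refine ⟨c, funext fun k => ?_⟩
  by_cases hkx : k = x
  · simp [rigidityRow, hkx, hcx]
  · by_cases hky : k = y
    · subst hky
      simp only [Pi.smul_apply, rigidityRow, if_neg hkx, if_true, hy, hcx]
      rw [← smul_neg, neg_sub]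
    · simp [rigidityRow, hkx, hky, hsupp k ⟨hkx, hky⟩]

/-- Frameworks on the two pieces that agree on the identified vertices come from a framework of
the glued graph. -/
theorem exists_glued_framework {V₁ V₂ W X : Type*} [Zero X] {f : V₁ → W} {g : V₂ → W}
    (hf : Function.Injective f) (hg : Function.Injective g) (p₁ : V₁ → X) (p₂ : V₂ → X)
    (h : ∀ x y, f x = g y → p₁ x = p₂ y) : ∃ p : W → X, p ∘ f = p₁ ∧ p ∘ g = p₂ := by
  refine ⟨Function.extend f p₁ (Function.extend g p₂ 0),
    funext fun x => hf.extend_apply _ _ x, funext fun y => ?_⟩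
  simp only [Function.comp_apply]
  by_cases hy : ∃ x, f x = g y
  · obtain ⟨x, hx⟩ := hy
    rw [← hx, hf.extend_apply, h x y hx]
  · rw [Function.extend_apply' _ _ _ hy, hg.extend_apply]

theorem IsGlue.edgeSet_eq {V₁ V₂ W : Type*} {G₁ : SimpleGraph V₁} {G₂ : SimpleGraph V₂}
    {G : SimpleGraph W} {f : V₁ → W} {g : V₂ → W} (h : IsGlue G₁ G₂ G f g) :
    G.edgeSet = Sym2.map f '' G₁.edgeSet ∪ Sym2.map g '' G₂.edgeSet := by
  ext e
  constructor
  · induction e with | _ i j =>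
    intro he
    rcases (h.adj_iff i j).1 he with ⟨x, x', rfl, rfl, hx⟩ | ⟨x, x', rfl, rfl, hx⟩
    · exact Or.inl ⟨s(x, x'), hx, rfl⟩
    · exact Or.inr ⟨s(x, x'), hx, rfl⟩
  · rintro (⟨e, he, rfl⟩ | ⟨e, he, rfl⟩) <;> induction e with | _ i j => ?_
    · exact (h.adj_iff _ _).2 (Or.inl ⟨i, j, rfl, rfl, he⟩)
    · exact (h.adj_iff _ _).2 (Or.inr ⟨i, j, rfl, rfl, he⟩)

theorem mem_range_of_mem_map {V W : Type*} {f : V → W} {E : Set (Sym2 V)} :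
    ∀ e ∈ Sym2.map f '' E, ∀ v ∈ e, v ∈ Set.range f := by
  rintro _ ⟨e, -, rfl⟩ v hv
  obtain ⟨x, -, rfl⟩ := Sym2.mem_map.1 hv
  exact ⟨x, rfl⟩

/-- A 1-sum of independent graphs is independent: after translating one framework, a load
resolvable by both sides is supported on one vertex, hence zero. -/
theorem isIndependent_oneSum {V₁ V₂ W : Type*} [Finite V₁] [DecidableEq V₁] [Finite V₂]
    [DecidableEq V₂] [Fintype W] [DecidableEq W] {G₁ : SimpleGraph V₁} {G₂ : SimpleGraph V₂}
    {G : SimpleGraph W} {f : V₁ → W} {g : V₂ → W} (hglue : IsGlue G₁ G₂ G f g)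
    (hind₁ : IsIndependent G₁) (hind₂ : IsIndependent G₂) {v₁ : V₁} {v₂ : V₂}
    (hs : ∀ x y, f x = g y → x = v₁ ∧ y = v₂) :
    IsIndependent G := by
  obtain ⟨p₁, hp₁⟩ := (isIndependent_iff G₁).1 hind₁
  obtain ⟨p₂, hp₂⟩ := (isIndependent_iff G₂).1 hind₂
  obtain ⟨p, rfl, hpg⟩ := exists_glued_framework hglue.f_inj hglue.g_inj p₁
    (fun i => LinearEquiv.refl ℝ _ (p₂ i) + (p₁ v₁ - p₂ v₂)) (by
      intro x y hxy
      obtain ⟨rfl, rfl⟩ := hs x y hxy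
      simp)
  have hp₂' := linearIndepOn_affine (LinearEquiv.refl ℝ _) (p (f v₁) - p₂ v₂) p₂ _ hp₂
  simp only [Function.comp_apply] at hpg
  rw [← hpg] at hp₂'
  refine (isIndependent_iff G).2 ⟨p, ?_⟩
  rw [hglue.edgeSet_eq]
  refine ((linearIndepOn_image_iff f hglue.f_inj p _).2 hp₁).union
    ((linearIndepOn_image_iff g hglue.g_inj p _).2 hp₂') ?_
  rw [Submodule.disjoint_def]
  intro w hw₁ hw₂
  have hoff : ∀ k, k ≠ f v₁ → w k = 0 := by
    intro k hk
    by_cases hkf : k ∈ Set.range f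
    · refine eq_zero_off_of_mem_span p mem_range_of_mem_map hw₂ ?_
      rintro ⟨y, rfl⟩
      obtain ⟨x, hx⟩ := hkf
      exact hk (by rw [← hx, (hs x y hx).1])
    · exact eq_zero_off_of_mem_span p mem_range_of_mem_map hw₁ hkf
  have h0 := (equilibrium p _ hw₁).1
  rw [Fintype.sum_eq_single _ hoff] at h0
  funext k
  by_cases hk : k = f v₁
  · rw [hk, h0]; rfl
  · exact hoff k hk

/-- A 2-sum of independent graphs is independent: after an invertible affine map the two
frameworks agree on the common edge, and a load resolvable both by `G₁` and by `G₂` without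
the common edge is a multiple of the row of that edge, hence zero. -/
theorem isIndependent_twoSum {V₁ V₂ W : Type*} [Finite V₁] [DecidableEq V₁] [Finite V₂]
    [DecidableEq V₂] [Fintype W] [DecidableEq W] {G₁ : SimpleGraph V₁} {G₂ : SimpleGraph V₂}
    {G : SimpleGraph W} {f : V₁ → W} {g : V₂ → W} (hglue : IsGlue G₁ G₂ G f g)
    (hind₁ : IsIndependent G₁) (hind₂ : IsIndependent G₂) {x₁ y₁ : V₁} {x₂ y₂ : V₂}
    (he₁ : G₁.Adj x₁ y₁) (he₂ : G₂.Adj x₂ y₂) (hx : f x₁ = g x₂) (hy : f y₁ = g y₂)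
    (hs : ∀ x y, f x = g y → (x = x₁ ∧ y = x₂) ∨ (x = y₁ ∧ y = y₂)) :
    IsIndependent G := by
  obtain ⟨p₁, hp₁⟩ := (isIndependent_iff G₁).1 hind₁
  obtain ⟨p₂, hp₂⟩ := (isIndependent_iff G₂).1 hind₂
  -- The row of an edge belongs to an independent family, so it is nonzero: the ends of the common
  -- edge are placed at distinct points in both frameworks.
  have hd₁ : p₁ y₁ - p₁ x₁ ≠ 0 := by
    intro h
    have h' : p₁ x₁ - p₁ y₁ = 0 := by rw [← neg_sub, h, neg_zero]
    exact hp₁.ne_zero (i := s(x₁, y₁)) he₁ (by rw [edgeRow_mk, rigidityRow_eq_single, h']; simp)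
  have hd₂ : p₂ y₂ - p₂ x₂ ≠ 0 := by
    intro h
    have h' : p₂ x₂ - p₂ y₂ = 0 := by rw [← neg_sub, h, neg_zero]
    exact hp₂.ne_zero (i := s(x₂, y₂)) he₂ (by rw [edgeRow_mk, rigidityRow_eq_single, h']; simp)
  obtain ⟨A, hA⟩ := SeparatingDual.exists_continuousLinearEquiv_apply_eq (R := ℝ) hd₂ hd₁
  have hp₂' := linearIndepOn_affine A.toLinearEquiv (p₁ x₁ - A (p₂ x₂)) p₂ _ hp₂
  obtain ⟨p, hpf, hpg⟩ := exists_glued_framework hglue.f_inj hglue.g_inj p₁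
    (fun i => A.toLinearEquiv (p₂ i) + (p₁ x₁ - A (p₂ x₂))) (by
      intro x y hxy
      rcases hs x y hxy with ⟨rfl, rfl⟩ | ⟨rfl, rfl⟩
      · simp
      · rw [map_sub, sub_eq_sub_iff_add_eq_add] at hA
        simp only [ContinuousLinearEquiv.coe_toLinearEquiv]
        rw [← add_sub_assoc, hA, add_sub_cancel_right])
  rw [← hpf] at hp₁ hd₁
  rw [← hpg] at hp₂'
  have hmap : (s(x₂, y₂) : Sym2 V₂).map g = s(f x₁, f y₁) := by simp [hx, hy]
  have hpxy : p (f x₁) ≠ p (f y₁) := fun h => hd₁ (by simp [h])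
  have hLI := (linearIndepOn_image_iff g hglue.g_inj p _).2 hp₂'
  have hmem : s(f x₁, f y₁) ∈ Sym2.map g '' G₂.edgeSet := ⟨s(x₂, y₂), he₂, hmap⟩
  have hE : G.edgeSet =
      Sym2.map f '' G₁.edgeSet ∪ (Sym2.map g '' G₂.edgeSet \ {s(f x₁, f y₁)}) := by
    rw [hglue.edgeSet_eq]
    ext e
    constructor
    · rintro (h | h)
      · exact Or.inl h
      · by_cases hee : e = s(f x₁, f y₁)
        · exact Or.inl (hee ▸ ⟨s(x₁, y₁), he₁, rfl⟩)
        · exact Or.inr ⟨h, hee⟩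
    · rintro (h | h)
      · exact Or.inl h
      · exact Or.inr h.1
  refine (isIndependent_iff G).2 ⟨p, ?_⟩
  rw [hE]
  refine ((linearIndepOn_image_iff f hglue.f_inj p _).2 hp₁).union
    (hLI.mono Set.sdiff_subset) ?_
  rw [Submodule.disjoint_def]
  intro w hw₁ hw₂
  have hoff : ∀ k, k ≠ f x₁ ∧ k ≠ f y₁ → w k = 0 := by
    intro k hk
    by_cases hkf : k ∈ Set.range f
    · refine eq_zero_off_of_mem_span p (T := Set.range g)
        (fun e he => mem_range_of_mem_map e he.1) hw₂ ?_
      rintro ⟨y, rfl⟩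
      obtain ⟨x, hxk⟩ := hkf
      rcases hs x y hxk with ⟨rfl, -⟩ | ⟨rfl, -⟩
      · exact hk.1 hxk.symm
      · exact hk.2 hxk.symm
    · exact eq_zero_off_of_mem_span p mem_range_of_mem_map hw₁ hkf
  obtain ⟨h1, h2⟩ := equilibrium p _ hw₁
  obtain ⟨c, rfl⟩ := exists_smul_rigidityRow p (fun h => he₁.ne (hglue.f_inj h)) hpxy hoff h1 h2
  rw [← edgeRow_mk] at hw₂ ⊢
  rw [hLI.eq_zero_of_smul_mem_span hmem c hw₂, zero_smul]

/-! ### Implied non-edges -/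

theorem numEdges_addEdge [Finite V] (G : SimpleGraph V) {a b : V} (hab : a ≠ b)
    (hnadj : ¬ G.Adj a b) : numEdges (addEdge G a b) = numEdges G + 1 := by
  have : (addEdge G a b).edgeSet = insert s(a, b) G.edgeSet := by
    rw [addEdge, edgeSet_sup, edgeSet_fromEdgeSet]
    ext e
    simp only [Set.mem_union, Set.mem_sdiff, Set.mem_singleton_iff, Set.mem_insert_iff]
    constructor
    · rintro (h | h)
      · exact Or.inr h
      · exact Or.inl h.1
    · rintro (rfl | h)
      · exact Or.inr ⟨rfl, by simpa using hab⟩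
      · exact Or.inl h
  rw [numEdges, this, Set.ncard_insert_of_notMem (a := s(a, b)) hnadj (Set.toFinite _), numEdges]

theorem genRank_mono [DecidableEq V] [Finite V] {G H : SimpleGraph V} (h : G ≤ H) :
    genRank G ≤ genRank H := by
  have := Fintype.ofFinite V
  obtain ⟨p, hp⟩ := exists_genRank_eq G
  refine le_trans ?_ (rankAt_le_genRank H p)
  rw [hp, rankAt_eq, rankAt_eq]
  exact Submodule.finrank_mono (Submodule.span_mono (Set.image_mono (edgeSet_mono h)))

/-- For an independent graph, a non-edge is implied exactly when adding it destroys
independence. -/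
theorem isImpliedNonEdge_iff [DecidableEq V] [Finite V] {G : SimpleGraph V}
    (hind : IsIndependent G) {a b : V} (hab : a ≠ b) (hnadj : ¬ G.Adj a b) :
    IsImpliedNonEdge G a b ↔ ¬ IsIndependent (addEdge G a b) := by
  have h1 : genRank G ≤ genRank (addEdge G a b) := genRank_mono le_sup_left
  have h2 := genRank_le_numEdges (addEdge G a b)
  have h3 := numEdges_addEdge G hab hnadj
  unfold IsImpliedNonEdge IsIndependent at *
  constructor
  · rintro ⟨-, -, h⟩
    omega
  · intro h
    exact ⟨hab, hnadj, by omega⟩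

theorem IsImpliedNonEdge.map {V W : Type*} [DecidableEq V] [DecidableEq W] [Finite V] [Finite W]
    {H : SimpleGraph V} {G : SimpleGraph W} (hH : IsIndependent H) (hG : IsIndependent G)
    {f : V → W} (hf : Function.Injective f) (hadj : ∀ x y, H.Adj x y → G.Adj (f x) (f y))
    {a b : V} (himp : IsImpliedNonEdge H a b) (hnadj : ¬ G.Adj (f a) (f b)) :
    IsImpliedNonEdge G (f a) (f b) := by
  have hab := himp.1
  rw [isImpliedNonEdge_iff hH hab himp.2.1] at himp
  rw [isImpliedNonEdge_iff hG (fun h => hab (hf h)) hnadj]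
  refine fun h => himp (h.of_injective f hf fun x y hxy => ?_)
  simp only [addEdge, sup_adj, fromEdgeSet_adj, Set.mem_singleton_iff] at hxy ⊢
  rcases hxy with hxy | ⟨hxy, hne⟩
  · exact Or.inl (hadj x y hxy)
  · refine Or.inr ⟨?_, fun h => hne (hf h)⟩
    have := congrArg (Sym2.map f) hxy
    simpa using this

/-! ### Counting edges of induced subgraphs -/

/-- Edges of an induced subgraph, counted inside a larger vertex type. -/
theorem numEdges_induce_eq {V W : Type*} (H : SimpleGraph V) (f : V → W)
    (hf : Function.Injective f) (S : Set W) :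
    numEdges (H.induce (f ⁻¹' S)) =
      {e : Sym2 W | e ∈ Sym2.map f '' H.edgeSet ∧ ∀ v ∈ e, v ∈ S}.ncard := by
  have hinj : Function.Injective (Sym2.map fun x : (f ⁻¹' S : Set V) => f x) :=
    Sym2.map.injective (hf.comp Subtype.val_injective)
  rw [numEdges, ← Set.ncard_image_of_injective _ hinj]
  congr 1
  ext e
  constructor
  · rintro ⟨e, he, rfl⟩
    induction e with | _ i j =>
    refine ⟨⟨s(i, j), he, rfl⟩, fun v hv => ?_⟩
    rcases Sym2.mem_iff.1 hv with rfl | rfl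
    exacts [i.2, j.2]
  · rintro ⟨⟨e, he, rfl⟩, hS⟩
    induction e with | _ i j =>
    exact ⟨s(⟨i, hS _ (by simp)⟩, ⟨j, hS _ (by simp)⟩), he, rfl⟩

theorem numEdges_induce_eq_self {W : Type*} (G : SimpleGraph W) (S : Set W) :
    numEdges (G.induce S) = {e : Sym2 W | e ∈ G.edgeSet ∧ ∀ v ∈ e, v ∈ S}.ncard := by
  simpa using numEdges_induce_eq G id Function.injective_id S

theorem IsIndependent.induce {V : Type*} [DecidableEq V] [Finite V] {G : SimpleGraph V}
    (h : IsIndependent G) (S : Set V) : IsIndependent (G.induce S) :=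
  h.of_injective (fun x : S => (x : V)) Subtype.val_injective fun _ _ hxy => hxy

/-- For an independent graph, nucleation-freeness is a statement about edge counts. -/
theorem nucleationFree_iff [DecidableEq V] [Finite V] {G : SimpleGraph V}
    (h : IsIndependent G) :
    NucleationFree G ↔
      ∀ S : Finset V, 5 ≤ S.card → numEdges (G.induce (S : Set V)) ≠ 3 * S.card - 6 := by
  unfold NucleationFree
  refine forall_congr' fun S => ?_
  rw [show genRank (G.induce (S : Set V)) = _ from h.induce S]

theorem IsIndependent.numEdges_induce_le [DecidableEq V] [Finite V] {G : SimpleGraph V}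
    (h : IsIndependent G) (S : Finset V) :
    (3 ≤ S.card → numEdges (G.induce (S : Set V)) ≤ 3 * S.card - 6) ∧
      (S.card = 2 → numEdges (G.induce (S : Set V)) ≤ 1) ∧
      (S.card ≤ 1 → numEdges (G.induce (S : Set V)) = 0) := by
  have := (h.induce (S : Set V)).numEdges_le
  simpa using this

/-- A vertex set of the sum lying in the first piece spans a subgraph of that piece, so its edge
count is not `3 |S| - 6`. The hypothesis on `G₂` says that its edges within the image of `V₁`
are also edges of `G₁`. -/
theorem induce_ne_of_subset_range {V₁ V₂ W : Type*} [Finite V₁] [DecidableEq V₁]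
    {G₁ : SimpleGraph V₁} {G₂ : SimpleGraph V₂} {G : SimpleGraph W} {f : V₁ → W} {g : V₂ → W}
    (hglue : IsGlue G₁ G₂ G f g) (hnf₁ : NucleationFree G₁) (hind₁ : IsIndependent G₁)
    (hcommon : ∀ e ∈ Sym2.map g '' G₂.edgeSet, (∀ v ∈ e, v ∈ Set.range f) →
      e ∈ Sym2.map f '' G₁.edgeSet)
    (S : Finset W) (hS : 5 ≤ S.card) (hsub : (S : Set W) ⊆ Set.range f) :
    numEdges (G.induce (S : Set W)) ≠ 3 * S.card - 6 := by
  classical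
  have hcard : (S.preimage f hglue.f_inj.injOn).card = S.card := by
    rw [← Finset.card_image_of_injective _ hglue.f_inj, Finset.image_preimage,
      Finset.filter_true_of_mem fun x hx => hsub hx]
  have h := (nucleationFree_iff hind₁).1 hnf₁ (S.preimage f hglue.f_inj.injOn) (by omega)
  rw [hcard, Finset.coe_preimage, numEdges_induce_eq _ _ hglue.f_inj] at h
  rw [numEdges_induce_eq_self, hglue.edgeSet_eq]
  have heq : {e : Sym2 W | e ∈ Sym2.map f '' G₁.edgeSet ∪ Sym2.map g '' G₂.edgeSet ∧
      ∀ v ∈ e, v ∈ (S : Set W)} =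
      {e | e ∈ Sym2.map f '' G₁.edgeSet ∧ ∀ v ∈ e, v ∈ (S : Set W)} := by
    ext e
    constructor
    · rintro ⟨he | he, h⟩
      · exact ⟨he, h⟩
      · exact ⟨hcommon e he fun v hv => hsub (h v hv), h⟩
    · rintro ⟨he, h⟩
      exact ⟨Or.inl he, h⟩
  rwa [heq]

theorem IsGlue.symm {V₁ V₂ W : Type*} {G₁ : SimpleGraph V₁} {G₂ : SimpleGraph V₂}
    {G : SimpleGraph W} {f : V₁ → W} {g : V₂ → W} (h : IsGlue G₁ G₂ G f g) :
    IsGlue G₂ G₁ G g f :=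
  ⟨h.g_inj, h.f_inj, fun w => (h.cover w).symm, fun w w' => (h.adj_iff w w').trans or_comm⟩

/-- A sum of independent graphs is nucleation-free when the two pieces share at most two vertices
and, if they share two, a common edge. A vertex set meeting both sides properly spans too few
edges: writing it as a union of `S₁` and `S₂`, Maxwell's count on both parts gives at most
`3 |S| - 7` edges, because the common edge is counted twice when `S₁` and `S₂` share both of its
ends. -/
theorem nucleationFree_glue {V₁ V₂ W : Type*} [Finite V₁] [DecidableEq V₁] [Finite V₂]
    [DecidableEq V₂] [Finite W] [DecidableEq W] {G₁ : SimpleGraph V₁} {G₂ : SimpleGraph V₂}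
    {G : SimpleGraph W} {f : V₁ → W} {g : V₂ → W} (hglue : IsGlue G₁ G₂ G f g)
    (hnf₁ : NucleationFree G₁) (hind₁ : IsIndependent G₁) (hnf₂ : NucleationFree G₂)
    (hind₂ : IsIndependent G₂) (hG : IsIndependent G) (x y : W)
    (hs : ∀ w, w ∈ Set.range f → w ∈ Set.range g → w = x ∨ w = y)
    (he : x ≠ y →
      s(x, y) ∈ Sym2.map f '' G₁.edgeSet ∧ s(x, y) ∈ Sym2.map g '' G₂.edgeSet) :
    NucleationFree G := by
  rw [nucleationFree_iff hG]
  intro S hS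
  -- An edge of `G` with both ends shared is the common edge.
  have hshared : ∀ e ∈ G.edgeSet, (∀ v ∈ e, v ∈ Set.range f) → (∀ v ∈ e, v ∈ Set.range g) →
      x ≠ y ∧ e = s(x, y) := by
    intro e heG h1 h2
    induction e with | _ i j =>
    have hij : i ≠ j := G.ne_of_adj heG
    rcases hs i (h1 i (by simp)) (h2 i (by simp)) with rfl | rfl <;>
      rcases hs j (h1 j (by simp)) (h2 j (by simp)) with rfl | rfl
    · exact absurd rfl hij
    · exact ⟨hij, rfl⟩
    · exact ⟨hij.symm, Sym2.eq_swap⟩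
    · exact absurd rfl hij
  by_cases hf : (S : Set W) ⊆ Set.range f
  · refine induce_ne_of_subset_range hglue hnf₁ hind₁ (fun e heg hef => ?_) S hS hf
    obtain ⟨hxy, rfl⟩ := hshared e (hglue.edgeSet_eq ▸ Or.inr heg) hef (mem_range_of_mem_map e heg)
    exact (he hxy).1
  by_cases hg : (S : Set W) ⊆ Set.range g
  · refine induce_ne_of_subset_range hglue.symm hnf₂ hind₂ (fun e hef heg => ?_) S hS hg
    obtain ⟨hxy, rfl⟩ := hshared e (hglue.edgeSet_eq ▸ Or.inl hef) (mem_range_of_mem_map e hef) heg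
    exact (he hxy).2
  obtain ⟨u, huS, huf⟩ := Set.not_subset.1 hf
  obtain ⟨u', huS', hug⟩ := Set.not_subset.1 hg
  set S₁ := S.preimage f hglue.f_inj.injOn with hS₁
  set S₂ := S.preimage g hglue.g_inj.injOn with hS₂
  have hi₁ : ∀ w, w ∈ S₁.image f ↔ w ∈ S ∧ w ∈ Set.range f := by
    intro w; simp only [hS₁, Finset.mem_image, Finset.mem_preimage, Set.mem_range]
    exact ⟨fun ⟨a, h, h'⟩ => ⟨h' ▸ h, a, h'⟩, fun ⟨h, a, h'⟩ => ⟨a, h'.symm ▸ h, h'⟩⟩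
  have hi₂ : ∀ w, w ∈ S₂.image g ↔ w ∈ S ∧ w ∈ Set.range g := by
    intro w; simp only [hS₂, Finset.mem_image, Finset.mem_preimage, Set.mem_range]
    exact ⟨fun ⟨a, h, h'⟩ => ⟨h' ▸ h, a, h'⟩, fun ⟨h, a, h'⟩ => ⟨a, h'.symm ▸ h, h'⟩⟩
  have hcard := Finset.card_union_add_card_inter (S₁.image f) (S₂.image g)
  rw [Finset.card_image_of_injective _ hglue.f_inj,
    Finset.card_image_of_injective _ hglue.g_inj] at hcard
  have hunion : S₁.image f ∪ S₂.image g = S := by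
    ext w
    rw [Finset.mem_union, hi₁, hi₂, ← and_or_left]
    exact and_iff_left (hglue.cover w)
  rw [hunion] at hcard
  set I := S₁.image f ∩ S₂.image g with hI
  have hIsub : I ⊆ {x, y} := by
    intro w hw
    rw [hI, Finset.mem_inter, hi₁, hi₂] at hw
    simpa using hs w hw.1.2 hw.2.2
  have hI2 : I.card ≤ 2 := (Finset.card_le_card hIsub).trans Finset.card_le_two
  have hlt₁ : I.card < S₁.card := by
    rw [← Finset.card_image_of_injective S₁ hglue.f_inj]
    refine Finset.card_lt_card (Finset.ssubset_iff_subset_ne.2 ⟨Finset.inter_subset_left, ?_⟩)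
    intro heq
    have hmem : u' ∈ I := heq ▸ (hi₁ u').2 ⟨huS', (hglue.cover u').resolve_right hug⟩
    exact hug ((hi₂ u').1 (Finset.mem_inter.1 hmem).2).2
  have hlt₂ : I.card < S₂.card := by
    rw [← Finset.card_image_of_injective S₂ hglue.g_inj]
    refine Finset.card_lt_card (Finset.ssubset_iff_subset_ne.2 ⟨Finset.inter_subset_right, ?_⟩)
    intro heq
    have hmem : u ∈ I := heq ▸ (hi₂ u).2 ⟨huS, (hglue.cover u).resolve_left huf⟩
    exact huf ((hi₁ u).1 (Finset.mem_inter.1 hmem).1).2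
  have hb₁ := hind₁.numEdges_induce_le S₁
  have hb₂ := hind₂.numEdges_induce_le S₂
  rw [hS₁, Finset.coe_preimage, numEdges_induce_eq _ _ hglue.f_inj, ← hS₁] at hb₁
  rw [hS₂, Finset.coe_preimage, numEdges_induce_eq _ _ hglue.g_inj, ← hS₂] at hb₂
  rw [numEdges_induce_eq_self]
  set A := {e : Sym2 W | e ∈ Sym2.map f '' G₁.edgeSet ∧ ∀ v ∈ e, v ∈ (S : Set W)}
  set B := {e : Sym2 W | e ∈ Sym2.map g '' G₂.edgeSet ∧ ∀ v ∈ e, v ∈ (S : Set W)}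
  have hAB : {e : Sym2 W | e ∈ G.edgeSet ∧ ∀ v ∈ e, v ∈ (S : Set W)} = A ∪ B := by
    ext e
    rw [hglue.edgeSet_eq]
    exact or_and_right
  have hsum := Set.ncard_union_add_ncard_inter A B (Set.toFinite _) (Set.toFinite _)
  rw [hAB]
  have hone : I.card = 2 → 1 ≤ (A ∩ B).ncard := by
    intro h2
    have hxy : x ≠ y := by
      rintro rfl
      have := Finset.card_le_card hIsub
      simp at this
      omega
    have hIeq : I = {x, y} :=
      Finset.eq_of_subset_of_card_le hIsub (by rw [h2]; exact Finset.card_le_two)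
    have hmemS : ∀ w ∈ I, w ∈ S := fun w hw => ((hi₁ w).1 (Finset.mem_inter.1 hw).1).1
    have hin : ∀ v ∈ s(x, y), v ∈ (S : Set W) := by
      intro v hv
      refine hmemS v ?_
      rw [hIeq]
      simpa using hv
    exact (Set.ncard_pos (Set.toFinite _)).2 ⟨s(x, y), ⟨(he hxy).1, hin⟩, ⟨(he hxy).2, hin⟩⟩
  omega

/-- **1-sums and 2-sums of nucleation-free independent graphs.**
If `G₁`, `G₂` are nucleation-free and independent in ℝ³ with implied non-edges
`{a₁,b₁}` and `{a₂,b₂}`, then any 1-sum (gluing at a single vertex) and any 2-sum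
(gluing along the two endpoints of an edge) of `G₁` and `G₂` is nucleation-free and
independent in ℝ³, and whenever the image of `{a₁,b₁}` (resp. `{a₂,b₂}`) is still a
non-edge of the sum it is an implied non-edge of the sum. -/
theorem one_sum_two_sum {V₁ V₂ W : Type*}
    [Fintype V₁] [DecidableEq V₁] [Fintype V₂] [DecidableEq V₂]
    [Fintype W] [DecidableEq W]
    (G₁ : SimpleGraph V₁) (G₂ : SimpleGraph V₂) (G : SimpleGraph W)
    (f : V₁ → W) (g : V₂ → W) (hglue : IsGlue G₁ G₂ G f g)
    (a₁ b₁ : V₁) (a₂ b₂ : V₂)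
    (hnf₁ : NucleationFree G₁) (hind₁ : IsIndependent G₁)
    (himp₁ : IsImpliedNonEdge G₁ a₁ b₁)
    (hnf₂ : NucleationFree G₂) (hind₂ : IsIndependent G₂)
    (himp₂ : IsImpliedNonEdge G₂ a₂ b₂)
    (hsum : -- 1-sum: identify a single vertex of `G₁` with a single vertex of `G₂`
      (∃ v₁ v₂, f v₁ = g v₂ ∧ ∀ x y, f x = g y → x = v₁ ∧ y = v₂) ∨
      -- 2-sum: identify the endpoints of an edge of `G₁` with those of an edge of `G₂`
      (∃ x₁ y₁ x₂ y₂, G₁.Adj x₁ y₁ ∧ G₂.Adj x₂ y₂ ∧ f x₁ = g x₂ ∧ f y₁ = g y₂ ∧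
        ∀ x y, f x = g y → (x = x₁ ∧ y = x₂) ∨ (x = y₁ ∧ y = y₂))) :
    NucleationFree G ∧ IsIndependent G ∧
      (¬ G.Adj (f a₁) (f b₁) → IsImpliedNonEdge G (f a₁) (f b₁)) ∧
      (¬ G.Adj (g a₂) (g b₂) → IsImpliedNonEdge G (g a₂) (g b₂)) := by
  have hadj₁ : ∀ x y, G₁.Adj x y → G.Adj (f x) (f y) := fun x y h =>
    (hglue.adj_iff _ _).2 (Or.inl ⟨x, y, rfl, rfl, h⟩)
  have hadj₂ : ∀ x y, G₂.Adj x y → G.Adj (g x) (g y) := fun x y h =>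
    (hglue.adj_iff _ _).2 (Or.inr ⟨x, y, rfl, rfl, h⟩)
  have hmain : IsIndependent G ∧ NucleationFree G := by
    rcases hsum with ⟨v₁, v₂, -, hs⟩ | ⟨x₁, y₁, x₂, y₂, he₁, he₂, hx, hy, hs⟩
    · have hG := isIndependent_oneSum hglue hind₁ hind₂ hs
      refine ⟨hG, nucleationFree_glue hglue hnf₁ hind₁ hnf₂ hind₂ hG (f v₁) (f v₁) ?_
        fun h => absurd rfl h⟩
      rintro _ ⟨x, rfl⟩ ⟨y, hy⟩
      exact Or.inl (by rw [(hs x y hy.symm).1])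
    · have hG := isIndependent_twoSum hglue hind₁ hind₂ he₁ he₂ hx hy hs
      refine ⟨hG, nucleationFree_glue hglue hnf₁ hind₁ hnf₂ hind₂ hG (f x₁) (f y₁) ?_
        fun _ => ⟨⟨s(x₁, y₁), he₁, rfl⟩, ⟨s(x₂, y₂), he₂, by simp [hx, hy]⟩⟩⟩
      rintro _ ⟨x, rfl⟩ ⟨y, hxy⟩
      rcases hs x y hxy.symm with ⟨rfl, -⟩ | ⟨rfl, -⟩
      · exact Or.inl rfl
      · exact Or.inr rfl
  exact ⟨hmain.2, hmain.1, himp₁.map hind₁ hmain.1 hglue.f_inj hadj₁,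
    himp₂.map hind₂ hmain.1 hglue.g_inj hadj₂⟩
end

section
/- Let G₁ be a nucleation-free graph that is independent in ℝ³ and has an implied non-edge {a,b}. Let w₁, w₂, w₃ be three distinct vertices of G₁ that are not all contained in a common K₄ subgraph of G₁, and let G be obtained from G₁ by a Henneberg-I construction: add a new vertex x adjacent exactly to w₁, w₂, w₃. Then G is nucleation-free, independent in ℝ³, and {a,b} is an implied non-edge of G. -/
/-!
The heart of the matter is that a Henneberg-I step raises the generic rank of *every* graph by
exactly three (`Rigid.genRank_henneberg`). The upper bound holds because three edges are added. For
the lower bound take a framework of maximal rank in which the three attachment vertices are not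
collinear (`Rigid.exists_generic`, a perturbation argument) and put the new vertex off their plane:
evaluation at the new vertex then maps the row space onto `ℝ³` and kills the old rows.
Independence follows by counting edges. Since adding the edge `ab` commutes with the step, the
equality of ranks that makes `ab` implied is preserved as well.

For nucleation-freeness suppose a set `S` of at least five vertices induces a rigid graph, and let
`S'` be `S` without the new vertex. Deleting a vertex with at most three neighbours lowers the rank
by at most three, so `S'` induces a graph of rank at least `3 |S'| - 6`, and Maxwell's bound
(`Rigid.genRank_add_six_le`: the row space is orthogonal to a 6-dimensional space of rigid motions)
makes this an equality. If `|S'| ≥ 5` this contradicts the hypothesis on the old graph. Otherwise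
`|S'| = 4`, the rank six forces `S'` to induce a `K₄`, and all three attachment vertices must lie
in `S'`, which is excluded.
-/

open SimpleGraph

variable {V : Type*}

/-- Henneberg-I construction: add a new vertex (`none`) adjacent exactly to the three
vertices `w₁, w₂, w₃` of `G`. -/
def hennebergI {V : Type*} (G : SimpleGraph V) (w₁ w₂ w₃ : V) : SimpleGraph (Option V) :=
  SimpleGraph.fromRel (fun x y =>
    (∃ x' y' : V, x = some x' ∧ y = some y' ∧ G.Adj x' y') ∨
    (x = none ∧ (y = some w₁ ∨ y = some w₂ ∨ y = some w₃)))

namespace Rigid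

/-! ### Rows, ranks and edge counts -/

/-- The set of rigidity rows of the edges of `G` at `p`. -/
def rows [DecidableEq V] (G : SimpleGraph V) (p : V → Fin 3 → ℝ) : Set (V → Fin 3 → ℝ) :=
  {w | ∃ i j, G.Adj i j ∧ w = rigidityRow p i j}

theorem finrank_map_of_injective {E F : Type*} [AddCommGroup E] [Module ℝ E] [AddCommGroup F]
    [Module ℝ F] (f : E →ₗ[ℝ] F) (hf : Function.Injective f) (p : Submodule ℝ E) :
    Module.finrank ℝ (p.map f) = Module.finrank ℝ p :=
  (Submodule.equivMapOfInjective f hf p).finrank_eq.symm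

theorem row_eq [DecidableEq V] (p : V → Fin 3 → ℝ) (i j : V) :
    rigidityRow p i j = Pi.single i (p i - p j) - Pi.single j (p i - p j) := by
  funext k
  by_cases hi : k = i
  · subst hi
    by_cases hj : k = j
    · subst hj; simp [rigidityRow]
    · simp [rigidityRow, hj]
  · by_cases hj : k = j
    · subst hj; simp [rigidityRow, hi]
    · simp [rigidityRow, hi, hj]

theorem row_symm [DecidableEq V] (p : V → Fin 3 → ℝ) (i j : V) :
    rigidityRow p i j = rigidityRow p j i := by
  rw [row_eq, row_eq, ← neg_sub (p i) (p j), Pi.single_neg, Pi.single_neg]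
  abel

theorem bddAbove_ranks [DecidableEq V] [Finite V] (G : SimpleGraph V) :
    BddAbove {n : ℕ | ∃ p : V → Fin 3 → ℝ, n = rankAt G p} := by
  refine ⟨Module.finrank ℝ (V → Fin 3 → ℝ), ?_⟩
  rintro n ⟨p, rfl⟩
  exact Submodule.finrank_le _

theorem rankAt_le_genRank [DecidableEq V] [Finite V] (G : SimpleGraph V) (p : V → Fin 3 → ℝ) :
    rankAt G p ≤ genRank G :=
  le_csSup (bddAbove_ranks G) ⟨p, rfl⟩

theorem exists_rankAt_eq [DecidableEq V] [Finite V] (G : SimpleGraph V) :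
    ∃ p : V → Fin 3 → ℝ, genRank G = rankAt G p :=
  Nat.sSup_mem (s := {n : ℕ | ∃ p : V → Fin 3 → ℝ, n = rankAt G p}) ⟨_, 0, rfl⟩
    (bddAbove_ranks G)

theorem genRank_mono [DecidableEq V] [Finite V] {G H : SimpleGraph V} (h : G ≤ H) :
    genRank G ≤ genRank H := by
  obtain ⟨p, hp⟩ := exists_rankAt_eq G
  rw [hp]
  refine le_trans (Submodule.finrank_mono (Submodule.span_mono ?_)) (rankAt_le_genRank H p)
  rintro w ⟨i, j, hij, rfl⟩
  exact ⟨i, j, h hij, rfl⟩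

theorem genRank_sup_le [DecidableEq V] [Finite V] (G H : SimpleGraph V) :
    genRank (G ⊔ H) ≤ genRank G + genRank H := by
  obtain ⟨p, hp⟩ := exists_rankAt_eq (G ⊔ H)
  rw [hp]
  refine le_trans ?_ (add_le_add (rankAt_le_genRank G p) (rankAt_le_genRank H p))
  refine le_trans (Submodule.finrank_mono ?_) (Submodule.finrank_add_le_finrank_add_finrank _ _)
  rw [← Submodule.span_union]
  refine Submodule.span_mono ?_
  rintro w ⟨i, j, hij | hij, rfl⟩
  · exact Or.inl ⟨i, j, hij, rfl⟩
  · exact Or.inr ⟨i, j, hij, rfl⟩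

theorem genRank_le_numEdges [DecidableEq V] [Finite V] (G : SimpleGraph V) :
    genRank G ≤ numEdges G := by
  obtain ⟨p, hp⟩ := exists_rankAt_eq G
  rw [hp]
  have hfin : G.edgeSet.Finite := Set.toFinite _
  set f : Sym2 V → (V → Fin 3 → ℝ) := Sym2.lift ⟨rigidityRow p, row_symm p⟩
  have himg : rows G p = f '' G.edgeSet := by
    ext w
    constructor
    · rintro ⟨i, j, hij, rfl⟩
      exact ⟨s(i, j), hij, rfl⟩
    · rintro ⟨e, he, rfl⟩
      induction e with
      | _ i j => exact ⟨i, j, he, rfl⟩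
  change Module.finrank ℝ (Submodule.span ℝ (rows G p)) ≤ _
  rw [himg, numEdges]
  have hle : (f '' G.edgeSet).ncard ≤ G.edgeSet.ncard := Set.ncard_image_le hfin
  refine le_trans ?_ hle
  have h := finrank_span_finset_le_card (R := ℝ) (hfin.image f).toFinset
  rwa [Set.Finite.coe_toFinset, ← Set.ncard_eq_toFinset_card _ (hfin.image f)] at h

/-! ### Transport along injections of vertex sets -/

/-- Extension by zero of vertex-indexed vectors along an injection of vertex sets. -/
noncomputable def extend {U : Type*} (f : U ↪ V) :
    (U → Fin 3 → ℝ) →ₗ[ℝ] (V → Fin 3 → ℝ) where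
  toFun g := Function.extend f g 0
  map_add' g h := by
    funext v
    by_cases hv : ∃ u, f u = v
    · obtain ⟨u, rfl⟩ := hv
      simp [f.injective.extend_apply]
    · simp [Function.extend_apply' _ _ _ hv]
  map_smul' c g := by
    funext v
    by_cases hv : ∃ u, f u = v
    · obtain ⟨u, rfl⟩ := hv
      simp [f.injective.extend_apply]
    · simp [Function.extend_apply' _ _ _ hv]

theorem extend_apply {U : Type*} (f : U ↪ V) (g : U → Fin 3 → ℝ) (u : U) :
    extend f g (f u) = g u := f.injective.extend_apply _ _ _

theorem extend_apply' {U : Type*} (f : U ↪ V) (g : U → Fin 3 → ℝ) (v : V)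
    (hv : ¬ ∃ u, f u = v) : extend f g v = 0 := Function.extend_apply' _ _ _ hv

theorem extend_injective {U : Type*} (f : U ↪ V) : Function.Injective (extend f) := by
  intro g h hgh
  funext u
  rw [← extend_apply f g, hgh, extend_apply]

theorem extend_row {U : Type*} [DecidableEq U] [DecidableEq V] (f : U ↪ V)
    (p : V → Fin 3 → ℝ) (i j : U) :
    extend f (rigidityRow (p ∘ f) i j) = rigidityRow p (f i) (f j) := by
  funext v
  by_cases hv : ∃ u, f u = v
  · obtain ⟨u, rfl⟩ := hv
    simp [extend_apply, rigidityRow]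
  · rw [extend_apply' _ _ _ hv]
    have h1 : v ≠ f i := fun h => hv ⟨i, h.symm⟩
    have h2 : v ≠ f j := fun h => hv ⟨j, h.symm⟩
    simp [rigidityRow, h1, h2]

theorem rows_map {U : Type*} [DecidableEq U] [DecidableEq V] (f : U ↪ V)
    (G : SimpleGraph U) (p : V → Fin 3 → ℝ) :
    rows (G.map f) p = extend f '' rows G (p ∘ f) := by
  ext w
  constructor
  · rintro ⟨i, j, hij, rfl⟩
    rw [SimpleGraph.map_adj] at hij
    obtain ⟨u, v, huv, rfl, rfl⟩ := hij
    exact ⟨_, ⟨u, v, huv, rfl⟩, extend_row f p u v⟩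
  · rintro ⟨_, ⟨u, v, huv, rfl⟩, rfl⟩
    exact ⟨f u, f v, (SimpleGraph.map_adj_apply).2 huv, extend_row f p u v⟩

theorem rankAt_map {U : Type*} [DecidableEq U] [DecidableEq V] (f : U ↪ V)
    (G : SimpleGraph U) (p : V → Fin 3 → ℝ) :
    rankAt (G.map f) p = rankAt G (p ∘ f) := by
  change Module.finrank ℝ (Submodule.span ℝ (rows (G.map f) p)) =
    Module.finrank ℝ (Submodule.span ℝ (rows G (p ∘ f)))
  rw [rows_map, Submodule.span_image]
  exact finrank_map_of_injective _ (extend_injective f) _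

theorem genRank_map {U : Type*} [DecidableEq U] [DecidableEq V] [Finite U] [Finite V]
    (f : U ↪ V) (G : SimpleGraph U) : genRank (G.map f) = genRank G := by
  apply le_antisymm
  · obtain ⟨p, hp⟩ := exists_rankAt_eq (G.map f)
    rw [hp, rankAt_map]
    exact rankAt_le_genRank _ _
  · obtain ⟨q, hq⟩ := exists_rankAt_eq G
    have : q = extend f q ∘ f := by
      funext u; exact (extend_apply f q u).symm
    rw [hq, this, ← rankAt_map]
    exact rankAt_le_genRank _ _

/-! ### General position -/

/-- Twice the signed area of the triangle `p u`, `p v`, `p w` projected to the first two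
coordinates. If it is non-zero the three points are not collinear. -/
def area (p : V → Fin 3 → ℝ) (u v w : V) : ℝ :=
  (p v 0 - p u 0) * (p w 1 - p u 1) - (p v 1 - p u 1) * (p w 0 - p u 0)

/-- Lower semicontinuity of the rank along a line: linear independence of a maximal set of rows
survives a small perturbation. -/
theorem eventually_rankAt_le [DecidableEq V] [Finite V] (G : SimpleGraph V)
    (p q : V → Fin 3 → ℝ) :
    ∀ᶠ t in nhds (0 : ℝ), rankAt G p ≤ rankAt G (p + t • q) := by
  cases nonempty_fintype V
  let R : (V → Fin 3 → ℝ) → {e : V × V // G.Adj e.1 e.2} → (V → Fin 3 → ℝ) :=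
    fun p e => rigidityRow p e.1.1 e.1.2
  have hR : ∀ p, Set.range (R p) = rows G p := by
    intro p
    ext x
    constructor
    · rintro ⟨e, rfl⟩
      exact ⟨_, _, e.2, rfl⟩
    · rintro ⟨i, j, hij, rfl⟩
      exact ⟨⟨(i, j), hij⟩, rfl⟩
  obtain ⟨κ, a, ha, hspan, hli⟩ := exists_linearIndependent' ℝ (R p)
  have : Finite κ := Finite.of_injective a ha
  have : Fintype κ := Fintype.ofFinite κ
  have hcard : Fintype.card κ = rankAt G p := by
    rw [← finrank_span_eq_card hli, hspan, hR]
    rfl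
  have hcont : Continuous fun t : ℝ => (R (p + t • q) ∘ a) := by
    refine continuous_pi fun k => ?_
    simp only [R, Function.comp_apply]
    generalize (a k).1.1 = i
    generalize (a k).1.2 = j
    refine continuous_pi fun x => ?_
    simp only [rigidityRow, Pi.add_apply, Pi.smul_apply]
    split_ifs <;> fun_prop
  have h0 : R (p + (0 : ℝ) • q) ∘ a = R p ∘ a := by simp
  have htend := hcont.tendsto 0
  rw [h0] at htend
  have hev : ∀ᶠ g in nhds (R p ∘ a), LinearIndependent ℝ g := hli.eventually
  refine (htend.eventually hev).mono fun t ht => ?_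
  rw [← hcard, ← finrank_span_eq_card ht]
  change _ ≤ Module.finrank ℝ (Submodule.span ℝ (rows G (p + t • q)))
  rw [← hR]
  exact Submodule.finrank_mono (Submodule.span_mono (Set.range_comp_subset_range _ _))

/-- Generic rank is attained in general position: along a suitable line `area` is a monic
quadratic in the parameter, so it does not vanish throughout an interval. -/
theorem exists_generic [DecidableEq V] [Finite V] (G : SimpleGraph V) {u v w : V}
    (huv : u ≠ v) (huw : u ≠ w) (hvw : v ≠ w) :
    ∃ p : V → Fin 3 → ℝ, genRank G ≤ rankAt G p ∧ area p u v w ≠ 0 := by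
  obtain ⟨p, hp⟩ := exists_rankAt_eq G
  let q : V → Fin 3 → ℝ := Pi.single v (Pi.single 0 1) + Pi.single w (Pi.single 1 1)
  obtain ⟨ε, hε, hball⟩ := Metric.eventually_nhds_iff.1 (eventually_rankAt_le G p q)
  have harea : ∀ t : ℝ, area (p + t • q) u v w =
      t ^ 2 + t * ((p v 0 - p u 0) + (p w 1 - p u 1)) + area p u v w := by
    intro t
    simp [area, q, huv, huw, hvw, hvw.symm]
    ring
  by_contra! hbad
  have hd : ∀ c : ℝ, 0 < c → c < 1 → area (p + (c * ε) • q) u v w = 0 := by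
    intro c h0 h1
    refine hbad _ (hp.le.trans (hball ?_))
    rw [Real.dist_eq, sub_zero, abs_of_pos (by positivity)]
    nlinarith
  -- the second difference of a monic quadratic is twice the squared step
  have h1 := hd (1 / 4) (by norm_num) (by norm_num)
  have h2 := hd (2 / 4) (by norm_num) (by norm_num)
  have h3 := hd (3 / 4) (by norm_num) (by norm_num)
  rw [harea] at h1 h2 h3
  have : ε ^ 2 = 0 := by linear_combination 8 * h1 - 16 * h2 + 8 * h3
  exact hε.ne' (pow_eq_zero_iff two_ne_zero |>.1 this)

/-! ### Rigid motions and the bound `3 |V| - 6` -/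

/-- The infinitesimal rigid motion `v ↦ t + ω × p v` of the framework `p`, as a linear map in
`(t, ω)`. -/
noncomputable def motion (p : V → Fin 3 → ℝ) :
    (Fin 3 → ℝ) × (Fin 3 → ℝ) →ₗ[ℝ] (V → Fin 3 → ℝ) where
  toFun m := fun v => m.1 + crossProduct m.2 (p v)
  map_add' m m' := by
    funext v
    simp only [Prod.fst_add, Prod.snd_add, map_add, LinearMap.add_apply, Pi.add_apply]
    abel
  map_smul' c m := by
    funext v
    simp

/-- A framework with three non-collinear vertices has a 6-dimensional space of infinitesimal rigid
motions. -/
theorem motion_injective (p : V → Fin 3 → ℝ) {u v w : V} (h : area p u v w ≠ 0) :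
    Function.Injective (motion p) := by
  rw [injective_iff_map_eq_zero]
  rintro ⟨t, ω⟩ hm
  have hx : ∀ x k, (motion p (t, ω)) x k = 0 := fun x k => by rw [hm]; rfl
  have hmot : ∀ x, motion p (t, ω) x = t + crossProduct ω (p x) := fun x => rfl
  simp only [hmot, cross_apply, Pi.add_apply, Fin.forall_fin_succ] at hx
  obtain ⟨u0, u1, u2, -⟩ := hx u
  obtain ⟨v0, v1, v2, -⟩ := hx v
  obtain ⟨w0, w1, w2, -⟩ := hx w
  simp at u0 u1 u2 v0 v1 v2 w0 w1 w2
  have hω : ω = 0 := by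
    have h2 : ω 2 = 0 := by
      refine (mul_eq_zero.1 ?_).resolve_right h
      unfold area
      linear_combination (p w 1 - p u 1) * (v1 - u1) + (p w 0 - p u 0) * (v0 - u0) +
        (p v 2 - p u 2) * (w2 - u2)
    have h0 : ω 0 = 0 := by
      refine (mul_eq_zero.1 ?_).resolve_right h
      unfold area
      linear_combination (p v 0 - p u 0) * (w2 - u2) - (p w 0 - p u 0) * (v2 - u2)
    have h1 : ω 1 = 0 := by
      refine (mul_eq_zero.1 ?_).resolve_right h
      unfold area
      linear_combination (p v 1 - p u 1) * (w2 - u2) - (p w 1 - p u 1) * (v2 - u2)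
    funext k
    fin_cases k <;> assumption
  subst hω
  simp at u0 u1 u2
  have : t = 0 := by
    funext k
    fin_cases k <;> assumption
  rw [this]; rfl

/-- Every rigidity row is orthogonal to every infinitesimal rigid motion. -/
theorem row_dot_motion [DecidableEq V] [Fintype V] (p : V → Fin 3 → ℝ) (i j : V)
    (m : (Fin 3 → ℝ) × (Fin 3 → ℝ)) :
    ∑ v, rigidityRow p i j v ⬝ᵥ motion p m v = 0 := by
  rw [row_eq]
  have hs : ∀ (k : V) (d : Fin 3 → ℝ),
      ∑ v, (Pi.single k d : V → Fin 3 → ℝ) v ⬝ᵥ motion p m v = d ⬝ᵥ motion p m k := by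
    intro k d
    rw [Finset.sum_eq_single k]
    · simp
    · intro b _ hb
      simp [hb]
    · simp
  simp only [Pi.sub_apply, sub_dotProduct, Finset.sum_sub_distrib, hs]
  simp [motion, dotProduct, Fin.sum_univ_three, cross_apply]
  ring

/-- Maxwell's bound: the row space meets the 6-dimensional space of rigid motions trivially. -/
theorem genRank_add_six_le [DecidableEq V] [Fintype V] (G : SimpleGraph V)
    (h3 : 3 ≤ Fintype.card V) : genRank G + 6 ≤ 3 * Fintype.card V := by
  obtain ⟨u, v, w, huv, huw, hvw⟩ := Fintype.two_lt_card_iff.1 h3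
  obtain ⟨p, hp, ha⟩ := exists_generic G huv huw hvw
  have hdisj : Disjoint (Submodule.span ℝ (rows G p)) (LinearMap.range (motion p)) := by
    rw [Submodule.disjoint_def]
    rintro x hx ⟨m, rfl⟩
    have hort : ∀ y ∈ Submodule.span ℝ (rows G p), ∑ v, y v ⬝ᵥ motion p m v = 0 := by
      intro y hy
      induction hy using Submodule.span_induction with
      | mem y hy =>
        obtain ⟨i, j, -, rfl⟩ := hy
        exact row_dot_motion p i j m
      | zero => simp
      | add y z _ _ hy hz => simp [add_dotProduct, Finset.sum_add_distrib, hy, hz]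
      | smul c y _ hy => simp [smul_dotProduct, ← Finset.mul_sum, hy]
    have h0 := hort _ hx
    have hnn : ∀ v ∈ Finset.univ, 0 ≤ motion p m v ⬝ᵥ motion p m v :=
      fun v _ => Finset.sum_nonneg fun k _ => mul_self_nonneg _
    rw [Finset.sum_eq_zero_iff_of_nonneg hnn] at h0
    funext v
    exact dotProduct_self_eq_zero.1 (h0 v (Finset.mem_univ _))
  have h := Submodule.finrank_add_finrank_le_of_disjoint hdisj
  rw [LinearMap.finrank_range_of_inj (motion_injective p ha)] at h
  simp [Module.finrank_pi_fintype] at h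
  change genRank G ≤ Module.finrank ℝ (Submodule.span ℝ (rows G p)) at hp
  omega

/-! ### The Henneberg-I step -/

/-- The star with centre `none` and leaves the members of `T`. -/
def star (T : Set V) : SimpleGraph (Option V) :=
  SimpleGraph.fromEdgeSet ((fun v => s(none, some v)) '' T)

theorem star_adj_none (T : Set V) (v : V) : (star T).Adj none (some v) ↔ v ∈ T := by
  simp [star]

theorem star_adj_some (T : Set V) (u v : V) : ¬ (star T).Adj (some u) (some v) := by
  simp [star]

theorem star_edgeSet (T : Set V) :
    (star T).edgeSet = (fun v => s(none, some v)) '' T := by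
  rw [star, SimpleGraph.edgeSet_fromEdgeSet, sdiff_eq_left, Set.disjoint_left]
  rintro _ ⟨v, -, rfl⟩
  simp

theorem numEdges_star (T : Set V) : numEdges (star T) = T.ncard := by
  rw [numEdges, star_edgeSet]
  refine Set.ncard_image_of_injective _ fun u v h => ?_
  simpa using h

theorem henneberg_eq (G : SimpleGraph V) (w₁ w₂ w₃ : V) :
    hennebergI G w₁ w₂ w₃ = G.map Function.Embedding.some ⊔ star {w₁, w₂, w₃} := by
  ext x y
  cases x <;> cases y <;>
    simp only [hennebergI, star, SimpleGraph.sup_adj, SimpleGraph.map_adj]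
  all_goals simp
  all_goals grind [SimpleGraph.Adj.ne, SimpleGraph.adj_comm]

theorem numEdges_map {U : Type*} (f : U ↪ V) (G : SimpleGraph U) :
    numEdges (G.map f) = numEdges G := by
  rw [numEdges, SimpleGraph.edgeSet_map]
  exact Set.ncard_image_of_injective _ f.sym2Map.injective

theorem ncard_three {w₁ w₂ w₃ : V} (h12 : w₁ ≠ w₂) (h13 : w₁ ≠ w₃) (h23 : w₂ ≠ w₃) :
    ({w₁, w₂, w₃} : Set V).ncard = 3 := Set.ncard_eq_three.2 ⟨_, _, _, h12, h13, h23, rfl⟩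

theorem numEdges_henneberg [Finite V] (G : SimpleGraph V) {w₁ w₂ w₃ : V}
    (h12 : w₁ ≠ w₂) (h13 : w₁ ≠ w₃) (h23 : w₂ ≠ w₃) :
    numEdges (hennebergI G w₁ w₂ w₃) = numEdges G + 3 := by
  rw [henneberg_eq, ← numEdges_map Function.Embedding.some G, ← ncard_three h12 h13 h23,
    ← numEdges_star, numEdges, SimpleGraph.edgeSet_sup, numEdges, numEdges]
  refine Set.ncard_union_eq ?_ (Set.toFinite _) (Set.toFinite _)
  rw [SimpleGraph.edgeSet_map, star_edgeSet, Set.disjoint_left]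
  rintro _ ⟨e, -, rfl⟩ ⟨v, -, hv⟩
  induction e with
  | _ i j => simp at hv

/-- Placing the new vertex off the plane of its three neighbours raises the rank by three:
evaluation at the new vertex maps the row space onto `ℝ³` and kills the old rows. -/
theorem rankAt_henneberg [DecidableEq V] [Finite V] (G : SimpleGraph V) {w₁ w₂ w₃ : V}
    (p : V → Fin 3 → ℝ) (h : area p w₁ w₂ w₃ ≠ 0) :
    ∃ q, rankAt G p + 3 ≤ rankAt (hennebergI G w₁ w₂ w₃) q := by
  let x : Fin 3 → ℝ := p w₁ + Pi.single 2 1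
  let q : Option V → Fin 3 → ℝ := fun o => o.elim x p
  refine ⟨q, ?_⟩
  set W := Submodule.span ℝ (rows (hennebergI G w₁ w₂ w₃) q) with hW
  change Module.finrank ℝ (Submodule.span ℝ (rows G p)) + 3 ≤ Module.finrank ℝ W
  have hold : (Submodule.span ℝ (rows G p)).map (extend Function.Embedding.some) ≤ W := by
    have hq : q ∘ (Function.Embedding.some : V ↪ Option V) = p := rfl
    rw [← hq, ← Submodule.span_image, ← rows_map]
    refine Submodule.span_mono ?_
    rintro _ ⟨i, j, hij, rfl⟩
    exact ⟨i, j, by rw [henneberg_eq]; exact Or.inl hij, rfl⟩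
  let L : W →ₗ[ℝ] (Fin 3 → ℝ) :=
    (LinearMap.proj (R := ℝ) (φ := fun _ : Option V => Fin 3 → ℝ) none).domRestrict W
  have hnew : ∀ w ∈ ({w₁, w₂, w₃} : Set V), x - p w ∈ LinearMap.range L := by
    intro w hw
    refine ⟨⟨rigidityRow q none (some w), Submodule.subset_span ⟨none, some w, ?_, rfl⟩⟩, ?_⟩
    · rw [henneberg_eq]
      exact Or.inr ((star_adj_none _ _).2 hw)
    · simp [L, rigidityRow, q]
  have hrange : LinearMap.range L = ⊤ := by
    rw [eq_top_iff]
    intro y _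
    have h1 := hnew w₁ (by simp)
    have h2 := hnew w₂ (by simp)
    have h3 := hnew w₃ (by simp)
    -- Cramer's rule in the first two coordinates; `x - p w₁` corrects the third
    let α : ℝ := (y 1 * (p w₃ 0 - p w₁ 0) - y 0 * (p w₃ 1 - p w₁ 1)) / area p w₁ w₂ w₃
    let β : ℝ := (y 0 * (p w₂ 1 - p w₁ 1) - y 1 * (p w₂ 0 - p w₁ 0)) / area p w₁ w₂ w₃
    let γ : ℝ := y 2 - α * (x - p w₂) 2 - β * (x - p w₃) 2
    have hy : y = γ • (x - p w₁) + α • (x - p w₂) + β • (x - p w₃) := by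
      funext k
      fin_cases k
      · simp [x, α, β]
        field_simp
        simp only [area]
        ring
      · simp [x, α, β]
        field_simp
        simp only [area]
        ring
      · simp [x, γ]
        ring
    rw [hy]
    exact add_mem (add_mem (Submodule.smul_mem _ _ h1) (Submodule.smul_mem _ _ h2))
      (Submodule.smul_mem _ _ h3)
  have hrn := LinearMap.finrank_range_add_finrank_ker L
  have hker : Module.finrank ℝ (Submodule.span ℝ (rows G p)) ≤
      Module.finrank ℝ (LinearMap.ker L) := by
    rw [← finrank_map_of_injective _
      (extend_injective (Function.Embedding.some : V ↪ Option V)),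
      ← finrank_map_of_injective W.subtype W.injective_subtype (LinearMap.ker L)]
    refine Submodule.finrank_mono ?_
    intro z hz
    refine ⟨⟨z, hold hz⟩, ?_, rfl⟩
    obtain ⟨g, -, rfl⟩ := hz
    change extend _ g none = 0
    exact extend_apply' _ _ _ (by simp)
  rw [hrange, finrank_top] at hrn
  simp at hrn
  omega

/-- A Henneberg-I step raises the generic rank of any graph by exactly three. Both independence and
the persistence of implied non-edges follow from this. -/
theorem genRank_henneberg [DecidableEq V] [Finite V] (G : SimpleGraph V) {w₁ w₂ w₃ : V}
    (h12 : w₁ ≠ w₂) (h13 : w₁ ≠ w₃) (h23 : w₂ ≠ w₃) :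
    genRank (hennebergI G w₁ w₂ w₃) = genRank G + 3 := by
  apply le_antisymm
  · rw [henneberg_eq, ← genRank_map Function.Embedding.some G, ← ncard_three h12 h13 h23,
      ← numEdges_star]
    exact (genRank_sup_le _ _).trans (by gcongr; exact genRank_le_numEdges _)
  · obtain ⟨p, hp, ha⟩ := exists_generic G h12 h13 h23
    obtain ⟨q, hq⟩ := rankAt_henneberg G p ha
    have := rankAt_le_genRank (hennebergI G w₁ w₂ w₃) q
    omega

/-- Adding an edge between old vertices commutes with the Henneberg-I step. -/
theorem addEdge_henneberg (G : SimpleGraph V) (w₁ w₂ w₃ a b : V) :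
    addEdge (hennebergI G w₁ w₂ w₃) (some a) (some b) =
      hennebergI (addEdge G a b) w₁ w₂ w₃ := by
  rw [henneberg_eq, henneberg_eq, addEdge, addEdge, sup_right_comm]
  congr 1
  ext x y
  cases x <;> cases y <;>
    simp only [SimpleGraph.sup_adj, SimpleGraph.map_adj]
  all_goals simp

/-! ### Nucleation-freeness -/

/-- The inclusion of a set `S` of old vertices into the vertices of the extended graph. -/
def incl (S : Finset V) : (S : Set V) ↪ Option V :=
  (Function.Embedding.subtype _).trans Function.Embedding.some

/-- On a vertex set `S` of the extended graph, the new vertex adds at most as much rank as it has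
neighbours in `S`. The set `T` need only contain those neighbours, and only when the new vertex
lies in `S`. -/
theorem genRank_induce_henneberg_le [DecidableEq V] [Finite V] (G : SimpleGraph V)
    (w₁ w₂ w₃ : V) (S : Finset (Option V)) (T : Set V)
    (hT : none ∈ S → ∀ w ∈ ({w₁, w₂, w₃} : Set V), some w ∈ S → w ∈ T) :
    genRank ((hennebergI G w₁ w₂ w₃).induce (S : Set (Option V))) ≤
      genRank (G.induce ((Finset.eraseNone S : Finset V) : Set V)) + T.ncard := by
  rw [← genRank_map (Function.Embedding.subtype _)
      ((hennebergI G w₁ w₂ w₃).induce (S : Set (Option V))),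
    ← genRank_map (incl (Finset.eraseNone S)), ← numEdges_star]
  refine le_trans (genRank_mono ?_) ((genRank_sup_le _ _).trans
    (add_le_add le_rfl (genRank_le_numEdges _)))
  intro x y hxy
  rw [SimpleGraph.map_adj] at hxy
  obtain ⟨⟨x, hx⟩, ⟨y, hy⟩, hxy, rfl, rfl⟩ := hxy
  have hadj : (hennebergI G w₁ w₂ w₃).Adj x y := hxy
  rw [henneberg_eq] at hadj
  change ((_ ⊔ _ : SimpleGraph (Option V)).Adj x y)
  rcases hadj with hadj | hadj
  · left
    rw [SimpleGraph.map_adj] at hadj ⊢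
    obtain ⟨u, v, huv, rfl, rfl⟩ := hadj
    exact ⟨⟨u, by simpa using hx⟩, ⟨v, by simpa using hy⟩, huv, rfl, rfl⟩
  · right
    cases x with
    | none =>
      cases y with
      | none => exact absurd rfl hadj.ne
      | some v => exact (star_adj_none _ _).2 (hT hx v ((star_adj_none _ _).1 hadj) hy)
    | some u =>
      cases y with
      | none =>
        exact ((star_adj_none _ _).2 (hT hy u ((star_adj_none _ _).1 hadj.symm) hx)).symm
      | some v => exact absurd hadj (star_adj_some _ _ _)

/-- Four vertices inducing a graph of rank at least six induce a `K₄`, because a proper subgraph of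
`K₄` has at most five edges. -/
theorem adj_of_six_le_genRank [DecidableEq V] (G : SimpleGraph V) (S : Finset V) (hS : S.card = 4)
    (h : 6 ≤ genRank (G.induce (S : Set V))) :
    ∀ u ∈ S, ∀ v ∈ S, u ≠ v → G.Adj u v := by
  classical
  have h6 := h.trans (genRank_le_numEdges _)
  have htop : G.induce (S : Set V) = ⊤ := by
    by_contra hne
    have hlt := Set.ncard_lt_ncard (SimpleGraph.edgeSet_strict_mono (lt_top_iff_ne_top.2 hne))
      (Set.toFinite _)
    have hc := SimpleGraph.card_edgeFinset_top_eq_card_choose_two (V := (S : Set V))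
    rw [← SimpleGraph.coe_edgeFinset (⊤ : SimpleGraph (S : Set V)), Set.ncard_coe_finset, hc]
      at hlt
    simp [hS, Nat.choose] at hlt
    rw [numEdges] at h6
    omega
  intro u hu v hv huv
  have : (G.induce (S : Set V)).Adj ⟨u, hu⟩ ⟨v, hv⟩ := by
    rw [htop]
    simpa using huv
  exact this

theorem nucleationFree_henneberg [DecidableEq V] [Finite V] (G : SimpleGraph V)
    (hnf : NucleationFree G) {w₁ w₂ w₃ : V}
    (h12 : w₁ ≠ w₂) (h13 : w₁ ≠ w₃) (h23 : w₂ ≠ w₃)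
    (hK4 : ¬ (G.Adj w₁ w₂ ∧ G.Adj w₁ w₃ ∧ G.Adj w₂ w₃ ∧
      ∃ z, G.Adj z w₁ ∧ G.Adj z w₂ ∧ G.Adj z w₃)) :
    NucleationFree (hennebergI G w₁ w₂ w₃) := by
  intro S hS hrank
  set S' : Finset V := Finset.eraseNone S with hS'
  have hmax : 3 ≤ S'.card → genRank (G.induce (S' : Set V)) + 6 ≤ 3 * S'.card := by
    intro h3
    have := genRank_add_six_le (G.induce (S' : Set V)) (by simpa using h3)
    simpa using this
  by_cases hn : none ∈ S
  · have hcard : S'.card + 1 = S.card := by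
      rw [hS', Finset.card_eraseNone_of_mem hn]; omega
    have hle := genRank_induce_henneberg_le G w₁ w₂ w₃ S {w₁, w₂, w₃} (fun _ w hw _ => hw)
    rw [ncard_three h12 h13 h23, hrank, ← hS'] at hle
    have hm := hmax (by omega)
    by_cases h5 : 5 ≤ S'.card
    · exact hnf S' h5 (by omega)
    have h4 : S'.card = 4 := by omega
    have hcomplete := adj_of_six_le_genRank G S' h4 (by omega)
    -- a missing neighbour would leave the new vertex with at most two edges, hence rank at most 8
    have hmem : ∀ w ∈ ({w₁, w₂, w₃} : Set V), w ∈ S' := by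
      intro w hw
      by_contra hwS
      have hle2 := genRank_induce_henneberg_le G w₁ w₂ w₃ S ({w₁, w₂, w₃} \ {w})
        (fun _ v hv hvS => ⟨hv, by rintro rfl; exact hwS (by simpa [hS'] using hvS)⟩)
      have := Set.ncard_sdiff_singleton_lt_of_mem hw (Set.toFinite _)
      rw [ncard_three h12 h13 h23] at this
      rw [hrank, ← hS'] at hle2
      omega
    have m1 := hmem w₁ (by simp)
    have m2 := hmem w₂ (by simp)
    have m3 := hmem w₃ (by simp)
    obtain ⟨z, hz, hz'⟩ := Finset.exists_mem_notMem_of_card_lt_card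
      (s := {w₁, w₂, w₃}) (t := S') (by rw [h4]; exact lt_of_le_of_lt Finset.card_le_three (by omega))
    simp only [Finset.mem_insert, Finset.mem_singleton, not_or] at hz'
    exact hK4 ⟨hcomplete _ m1 _ m2 h12, hcomplete _ m1 _ m3 h13, hcomplete _ m2 _ m3 h23,
      z, hcomplete _ hz _ m1 hz'.1, hcomplete _ hz _ m2 hz'.2.1, hcomplete _ hz _ m3 hz'.2.2⟩
  · have hcard : S'.card = S.card := Finset.card_eraseNone_of_not_mem hn
    have hle := genRank_induce_henneberg_le G w₁ w₂ w₃ S ∅ (fun h => absurd h hn)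
    rw [Set.ncard_empty, hrank, ← hS'] at hle
    have hm := hmax (by omega)
    exact hnf S' (by omega) (by omega)

end Rigid

/-- **Henneberg-I preserves nucleation-freeness, independence and implied non-edges**,
provided the three attachment vertices are not all contained in a common `K₄`
subgraph of `G₁`. -/
theorem hennebergI_nucleationFree_independent {V : Type*} [Fintype V] [DecidableEq V]
    (G₁ : SimpleGraph V) (a b : V)
    (hnf : NucleationFree G₁) (hind : IsIndependent G₁)
    (himp : IsImpliedNonEdge G₁ a b)
    (w₁ w₂ w₃ : V) (hw : w₁ ≠ w₂ ∧ w₁ ≠ w₃ ∧ w₂ ≠ w₃)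
    (hK4 : ¬ (G₁.Adj w₁ w₂ ∧ G₁.Adj w₁ w₃ ∧ G₁.Adj w₂ w₃ ∧
      ∃ z, G₁.Adj z w₁ ∧ G₁.Adj z w₂ ∧ G₁.Adj z w₃)) :
    NucleationFree (hennebergI G₁ w₁ w₂ w₃) ∧
    IsIndependent (hennebergI G₁ w₁ w₂ w₃) ∧
    IsImpliedNonEdge (hennebergI G₁ w₁ w₂ w₃) (some a) (some b) := by
  obtain ⟨h12, h13, h23⟩ := hw
  obtain ⟨hab, hnadj, hrank⟩ := himp
  refine ⟨Rigid.nucleationFree_henneberg G₁ hnf h12 h13 h23 hK4, ?_, ?_, ?_, ?_⟩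
  · rw [IsIndependent, Rigid.genRank_henneberg G₁ h12 h13 h23,
      Rigid.numEdges_henneberg G₁ h12 h13 h23, hind]
  · simpa using hab
  · rw [Rigid.henneberg_eq]
    rintro (h | h)
    · exact hnadj (SimpleGraph.map_adj_apply.1 h)
    · exact Rigid.star_adj_some _ _ _ h
  · rw [Rigid.addEdge_henneberg, Rigid.genRank_henneberg _ h12 h13 h23,
      Rigid.genRank_henneberg _ h12 h13 h23, hrank]
end
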